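/- (Weighted endpoint estimate for the boundary case) Let n ≥ 3, 0 < α < n, 0 < ε < 1 with n−1+ε ≤ n, and V ≥ 0 measurable with V ∈ 𝓛^{α,p} for p = q(n−1+ε)/α and some 1 < q ≤ n/(n−1+ε). Then for any ball B = B(0,r), ‖χ_B · V^{(n−1+ε)/2α} · I_{n−1+ε}(V^{(n−1+ε)/2α} g)‖_{L²} ≤ C ‖χ_B V‖_{𝓛^{α,p}}^{(n−1+ε)/2α} ‖V‖_{𝓛^{α,p}}^{(n−1+ε)/2α} ‖g‖_{L²} for all measurable g, with C = C(n,α,p). -/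

import Mathlib

open MeasureTheory ENNReal Metric Set Filter
open scoped FourierTransform
noncomputable section

abbrev Euc (n : ℕ) := EuclideanSpace ℝ (Fin n)

/-- The axis-parallel cube with corner `a` and side length `s`. -/
def cube {n : ℕ} (a : Fin n → ℝ) (s : ℝ) : Set (Euc n) :=
  {x | ∀ i, a i ≤ x i ∧ x i ≤ a i + s}

/-- The Morrey norm `‖V‖_{𝓛^{α,p}} = sup_Q |Q|^{α/n} ((1/|Q|)∫_Q V^p)^{1/p}`. -/
def morrey (n : ℕ) (α p : ℝ) (V : Euc n → ℝ) : ℝ≥0∞ :=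
  ⨆ (a : Fin n → ℝ) (s : ℝ) (_ : 0 < s),
    volume (cube a s) ^ (α / n) *
      ((volume (cube a s))⁻¹ * ∫⁻ y in cube a s, ENNReal.ofReal (V y ^ p)) ^ (1 / p)

/-- Unnormalized Riesz potential `I_γ f (x) = ∫ |x-y|^{γ-n} f(y) dy` (`ℝ≥0∞`-valued). -/
def rieszE {n : ℕ} (γ : ℝ) (f : Euc n → ℝ≥0∞) (x : Euc n) : ℝ≥0∞ :=
  ∫⁻ y, ENNReal.ofReal ‖x - y‖ ^ (γ - n) * f y

/-!
Normalised by their Morrey norms, the weight `V ^ (β / 2α)` and its restriction to the ball are both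
dominated by the square root of one weight `z` (the square of their maximum), so it suffices to
bound the operator with kernel `|x - y| ^ (-(n - β))` on `L²(z dx)`. This is done by the Schur test,
with the Riesz potential of order `β (q + 1) / 2` of the measure `z ^ q dx` as test function.

By Fubini, the Schur condition is an estimate of `∫ |x - y| ^ (-(n - β)) |v - y| ^ (-b) z(y) dy`,
where `b = n - β (q + 1) / 2`, over the regions near `v`, near `x` and far from both. Near `v` and
far away the growth of `z dx` on balls suffices. Near `x` the exponent is critical and the integral
may diverge; truncating `z` at a level depending on `|x - y|` trades it for an integral against
`z ^ q dx`, which becomes finite after integration in `v`, by Fubini on `{|x - y| ≤ |x - v|}`.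
-/

open scoped NNReal

section Schur

variable {Y Z : Type*} [MeasurableSpace Y] [MeasurableSpace Z] {μ : Measure Y} {ν : Measure Z}

theorem sq_lintegral_le_of_sq_le_mul {f a b : Y → ℝ≥0∞} (ha : AEMeasurable a μ)
    (hb : AEMeasurable b μ) (h : ∀ᵐ y ∂μ, f y ^ 2 ≤ a y * b y) :
    (∫⁻ y, f y ∂μ) ^ 2 ≤ (∫⁻ y, a y ∂μ) * ∫⁻ y, b y ∂μ := by
  have hsqrt : ∀ c : ℝ≥0∞, (c ^ (1 / 2 : ℝ)) ^ 2 = c := fun c => by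
    rw [← ENNReal.rpow_two, ← ENNReal.rpow_mul]
    simp
  have hf : ∀ᵐ y ∂μ, f y ≤ a y ^ (1 / 2 : ℝ) * b y ^ (1 / 2 : ℝ) := by
    filter_upwards [h] with y hy
    rwa [← ENNReal.pow_le_pow_left_iff two_ne_zero, mul_pow, hsqrt, hsqrt]
  calc (∫⁻ y, f y ∂μ) ^ 2
      ≤ ((∫⁻ y, a y ∂μ) ^ (1 / 2 : ℝ) * (∫⁻ y, b y ∂μ) ^ (1 / 2 : ℝ)) ^ 2 := by
        gcongr
        exact (lintegral_mono_ae hf).trans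
          (ENNReal.lintegral_mul_norm_pow_le ha hb (by norm_num) (by norm_num) (by norm_num))
    _ = _ := by rw [mul_pow, hsqrt, hsqrt]

theorem lintegral_sq_lintegral_mul_le_of_schur [SFinite μ] [SFinite ν] {k : Y → Z → ℝ≥0∞}
    {φ f : Z → ℝ≥0∞} {ψ : Y → ℝ≥0∞} {A B : ℝ≥0∞} (hk : Measurable (Function.uncurry k))
    (hφ : Measurable φ) (hψ : Measurable ψ) (hf : Measurable f)
    (hφ₀ : ∀ᵐ z ∂ν, φ z ≠ 0) (hφ_top : ∀ᵐ z ∂ν, φ z ≠ ⊤)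
    (hA : ∀ y, ∫⁻ z, k y z * φ z ∂ν ≤ A * ψ y) (hB : ∀ z, ∫⁻ y, k y z * ψ y ∂μ ≤ B * φ z) :
    ∫⁻ y, (∫⁻ z, k y z * f z ∂ν) ^ 2 ∂μ ≤ A * B * ∫⁻ z, f z ^ 2 ∂ν := by
  have hcauchy : ∀ y, (∫⁻ z, k y z * f z ∂ν) ^ 2 ≤
      A * ψ y * ∫⁻ z, k y z * (f z ^ 2 * (φ z)⁻¹) ∂ν := by
    intro y
    refine (sq_lintegral_le_of_sq_le_mul (a := fun z => k y z * φ z) (by fun_prop) (by fun_prop)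
      ?_).trans (mul_le_mul_left (hA y) _)
    filter_upwards [hφ₀, hφ_top] with z hz₀ hz
    refine Eq.le ?_
    calc (k y z * f z) ^ 2 = k y z * (k y z * f z ^ 2) * (φ z * (φ z)⁻¹) := by
          rw [ENNReal.mul_inv_cancel hz₀ hz]
          ring
      _ = k y z * φ z * (k y z * (f z ^ 2 * (φ z)⁻¹)) := by ring
  calc ∫⁻ y, (∫⁻ z, k y z * f z ∂ν) ^ 2 ∂μ
      ≤ ∫⁻ y, A * ψ y * ∫⁻ z, k y z * (f z ^ 2 * (φ z)⁻¹) ∂ν ∂μ := lintegral_mono hcauchy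
    _ = ∫⁻ y, ∫⁻ z, A * ψ y * (k y z * (f z ^ 2 * (φ z)⁻¹)) ∂ν ∂μ := by
        refine lintegral_congr fun y => (lintegral_const_mul _ ?_).symm
        fun_prop
    _ = ∫⁻ z, ∫⁻ y, A * ψ y * (k y z * (f z ^ 2 * (φ z)⁻¹)) ∂μ ∂ν :=
        lintegral_lintegral_swap (Measurable.aemeasurable (by fun_prop))
    _ = ∫⁻ z, A * (f z ^ 2 * (φ z)⁻¹) * ∫⁻ y, k y z * ψ y ∂μ ∂ν := by
        refine lintegral_congr fun z => ?_
        rw [← lintegral_const_mul _ (by fun_prop)]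
        exact lintegral_congr fun y => by ring
    _ ≤ ∫⁻ z, A * B * f z ^ 2 ∂ν := by
        refine lintegral_mono_ae ?_
        filter_upwards [hφ₀, hφ_top] with z hz₀ hz
        refine (mul_le_mul_right (hB z) _).trans_eq ?_
        calc _ = A * B * f z ^ 2 * ((φ z)⁻¹ * φ z) := by ring
          _ = _ := by rw [ENNReal.inv_mul_cancel hz₀ hz, mul_one]
    _ = A * B * ∫⁻ z, f z ^ 2 ∂ν := lintegral_const_mul _ (by fun_prop)

theorem mul_mul_div_cancel_of_sq_le {z w g : ℝ≥0∞} (hz : z ≠ ⊤) (hwz : w ^ 2 ≤ z) :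
    z * (w * g / z) = w * g := by
  rcases eq_or_ne z 0 with rfl | hz₀
  · simp [pow_eq_zero_iff two_ne_zero |>.1 (le_antisymm hwz zero_le)]
  · exact ENNReal.mul_div_cancel hz₀ hz

theorem mul_sq_mul_div_le_of_sq_le {z w g : ℝ≥0∞} (hz : z ≠ ⊤) (hwz : w ^ 2 ≤ z) :
    z * (w * g / z) ^ 2 ≤ g ^ 2 := by
  calc z * (w * g / z) ^ 2 = z * (w * g / z) * (w * g / z) := by ring
    _ = w * g * (w * g / z) := by rw [mul_mul_div_cancel_of_sq_le hz hwz]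
    _ = w ^ 2 / z * g ^ 2 := by
        simp only [div_eq_mul_inv]
        ring
    _ ≤ 1 * g ^ 2 := by
        gcongr
        exact ENNReal.div_le_of_le_mul (hwz.trans_eq (one_mul _).symm)
    _ = g ^ 2 := one_mul _

theorem lintegral_sq_mul_lintegral_mul_le_of_sq_le [SFinite μ] {k : Y → Y → ℝ≥0∞}
    {u w z g : Y → ℝ≥0∞} {C : ℝ≥0∞} (hk : Measurable (Function.uncurry k)) (hw : Measurable w)
    (hz : Measurable z) (hg : Measurable g) (hz_top : ∀ y, z y ≠ ⊤) (huz : ∀ y, u y ^ 2 ≤ z y)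
    (hwz : ∀ y, w y ^ 2 ≤ z y)
    (h : ∀ f : Y → ℝ≥0∞, Measurable f →
      ∫⁻ x, (∫⁻ y, k x y * f y ∂μ.withDensity z) ^ 2 ∂μ.withDensity z ≤
        C * ∫⁻ y, f y ^ 2 ∂μ.withDensity z) :
    ∫⁻ x, (u x * ∫⁻ y, k x y * (w y * g y) ∂μ) ^ 2 ∂μ ≤ C * ∫⁻ y, g y ^ 2 ∂μ := by
  have hinner : ∀ x, ∫⁻ y, k x y * (w y * g y / z y) ∂μ.withDensity z =
      ∫⁻ y, k x y * (w y * g y) ∂μ := by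
    intro x
    rw [lintegral_withDensity_eq_lintegral_mul _ hz (by fun_prop)]
    refine lintegral_congr fun y => ?_
    rw [Pi.mul_apply, mul_left_comm, mul_mul_div_cancel_of_sq_le (hz_top y) (hwz y)]
  have hmeas : Measurable fun x => ∫⁻ y, k x y * (w y * g y) ∂μ :=
    Measurable.lintegral_prod_right' (f := fun p : Y × Y => k p.1 p.2 * (w p.2 * g p.2))
      (by fun_prop)
  calc ∫⁻ x, (u x * ∫⁻ y, k x y * (w y * g y) ∂μ) ^ 2 ∂μ
      ≤ ∫⁻ x, z x * (∫⁻ y, k x y * (w y * g y) ∂μ) ^ 2 ∂μ := by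
        refine lintegral_mono fun x => ?_
        simp only [mul_pow]
        exact mul_le_mul_left (huz x) _
    _ = ∫⁻ x, (∫⁻ y, k x y * (w y * g y / z y) ∂μ.withDensity z) ^ 2 ∂μ.withDensity z := by
        simp only [hinner]
        exact (lintegral_withDensity_eq_lintegral_mul _ hz (hmeas.pow_const 2)).symm
    _ ≤ C * ∫⁻ y, (w y * g y / z y) ^ 2 ∂μ.withDensity z := h _ (by fun_prop)
    _ ≤ C * ∫⁻ y, g y ^ 2 ∂μ := by
        rw [lintegral_withDensity_eq_lintegral_mul _ hz (by fun_prop)]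
        gcongr
        exact mul_sq_mul_div_le_of_sq_le (hz_top _) (hwz _)

end Schur

section Growth

variable {X : Type*} [PseudoMetricSpace X] {d s : ℝ}

theorem rpow_neg_le_rpow_neg {a b : ℝ≥0∞} (hs : 0 ≤ s) (hab : a ≤ b) : b ^ (-s) ≤ a ^ (-s) := by
  rw [ENNReal.rpow_neg, ENNReal.rpow_neg, ENNReal.inv_le_inv]
  exact ENNReal.rpow_le_rpow hab hs

theorem div_two_rpow_neg {a : ℝ≥0∞} (ha : a ≠ ⊤) (s : ℝ) :
    (a / 2) ^ (-s) = 2 ^ s * a ^ (-s) := by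
  rw [div_eq_mul_inv, ENNReal.mul_rpow_of_ne_top ha (by simp), ENNReal.inv_rpow,
    ENNReal.rpow_neg 2, inv_inv, mul_comm]

theorem mul_pow_rpow {r θ : ℝ≥0∞} (hr : r ≠ ⊤) (hθ : θ ≠ ⊤) (k : ℕ) (a : ℝ) :
    (r * θ ^ k) ^ a = r ^ a * (θ ^ a) ^ k := by
  rw [ENNReal.mul_rpow_of_ne_top hr (by finiteness), ← ENNReal.rpow_natCast,
    ← ENNReal.rpow_natCast, ← ENNReal.rpow_mul, ← ENNReal.rpow_mul, mul_comm (k : ℝ)]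

theorem half_edist_le_of_edist_le_half {x y v : X} (h : edist v y ≤ edist x v / 2) :
    edist x v / 2 ≤ edist x y := by
  by_contra! hlt
  have : edist x v < edist x v / 2 + edist x v / 2 :=
    (edist_triangle_right x v y).trans_lt (ENNReal.add_lt_add_of_lt_of_le
      (ne_top_of_le_ne_top (by finiteness) h) hlt h)
  exact this.ne' (ENNReal.add_halves _)

theorem iUnion_closedEBall_nat_succ (o : X) : ⋃ N : ℕ, closedEBall o (N + 1 : ℕ) = univ := by
  refine univ_subset_iff.1 ((iUnion_closedBall_nat o).symm.subset.trans
    (iUnion_mono fun N => ?_))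
  rw [← ENNReal.ofReal_natCast, closedEBall_ofReal (by positivity)]
  exact closedBall_subset_closedBall (by simp)

theorem exists_mul_half_pow_le_le {t r : ℝ≥0∞} (ht : t ≠ 0) (hr : r ≠ ⊤) (htr : t ≤ 2 * r) :
    ∃ k : ℕ, r * 2⁻¹ ^ k ≤ t ∧ t ≤ 2 * (r * 2⁻¹ ^ k) := by
  lift r to ℝ≥0 using hr
  lift t to ℝ≥0 using ne_top_of_le_ne_top (by finiteness) htr
  have ht₀ : 0 < t := pos_iff_ne_zero.2 (coe_ne_zero.1 ht)
  have htr : t ≤ 2 * r := by exact_mod_cast htr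
  have hr₀ : 0 < 2 * r := ht₀.trans_le htr
  obtain ⟨k, hlt, hle⟩ := exists_nat_pow_near_of_lt_one (y := (2⁻¹ : ℝ≥0)) (div_pos ht₀ hr₀)
    ((div_le_one hr₀).2 htr) (by norm_num) (by norm_num)
  rw [lt_div_iff₀ hr₀, pow_succ] at hlt
  rw [div_le_iff₀ hr₀] at hle
  rw [← coe_inv_two]
  refine ⟨k, ?_, ?_⟩
  · have : r * 2⁻¹ ^ k ≤ t := hlt.le.trans_eq' (by field_simp)
    exact_mod_cast this
  · have : t ≤ 2 * (r * 2⁻¹ ^ k) := hle.trans_eq (by ring)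
    exact_mod_cast this

theorem exists_mul_two_pow_le_le {t r : ℝ≥0∞} (hr : r ≠ 0) (ht : t ≠ ⊤) (hrt : r ≤ t) :
    ∃ k : ℕ, r * 2 ^ k ≤ t ∧ t ≤ 2 * (r * 2 ^ k) := by
  lift t to ℝ≥0 using ht
  lift r to ℝ≥0 using ne_top_of_le_ne_top coe_ne_top hrt
  have hr₀ : 0 < r := pos_iff_ne_zero.2 (coe_ne_zero.1 hr)
  obtain ⟨k, hle, hlt⟩ := exists_nat_pow_near ((one_le_div hr₀).2 (coe_le_coe.1 hrt)) one_lt_two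
  rw [le_div_iff₀ hr₀, mul_comm] at hle
  rw [div_lt_iff₀ hr₀, pow_succ] at hlt
  refine ⟨k, by exact_mod_cast hle, ?_⟩
  have : t ≤ 2 * (r * 2 ^ k) := hlt.le.trans_eq (by ring)
  exact_mod_cast this

variable [MeasurableSpace X] {ν : Measure X} {D : ℝ≥0}

/-- `ν` gives every ball of finite positive radius `t` mass at most `D * t ^ d`. Radii are taken in
`ℝ≥0∞`, like the distances `edist x y` appearing in the kernels below. -/
def HasPolyGrowth (ν : Measure X) (D : ℝ≥0) (d : ℝ) : Prop :=
  ∀ (x : X) (t : ℝ≥0∞), t ≠ 0 → t ≠ ⊤ → ν (closedEBall x t) ≤ D * t ^ d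

namespace HasPolyGrowth

theorem eq_zero (hν : HasPolyGrowth ν 0 d) : ν = 0 := by
  rcases isEmpty_or_nonempty X with hX | ⟨⟨o⟩⟩
  · exact Measure.eq_zero_of_isEmpty ν
  rw [← Measure.measure_univ_eq_zero, ← iUnion_closedEBall_nat_succ o, measure_iUnion_null_iff]
  exact fun N => by simpa using hν o (N + 1 : ℕ) (by simp) (by simp)

theorem ae_edist_ne_zero (hν : HasPolyGrowth ν D d) (hd : 0 < d) (x : X) :
    ∀ᵐ y ∂ν, edist x y ≠ 0 := by
  have htendsto : Tendsto (fun t : ℝ≥0∞ => (D : ℝ≥0∞) * t ^ d) (nhdsWithin 0 {0}ᶜ) (nhds 0) := by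
    have hcont : Tendsto (fun t : ℝ≥0∞ => t ^ d) (nhdsWithin 0 {0}ᶜ) (nhds 0) := by
      simpa [hd] using ((ENNReal.continuous_rpow_const (y := d)).tendsto 0).mono_left
        nhdsWithin_le_nhds
    simpa using ENNReal.Tendsto.const_mul hcont (Or.inr coe_ne_top)
  have : ν {y | edist x y = 0} ≤ 0 := by
    refine ge_of_tendsto htendsto ?_
    filter_upwards [self_mem_nhdsWithin, nhdsWithin_le_nhds (Iio_mem_nhds zero_lt_top)]
      with t ht₀ ht
    refine (measure_mono fun y hy => ?_).trans (hν x t ht₀ ht.ne)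
    exact mem_closedEBall'.2 ((show edist x y = 0 from hy).trans_le zero_le)
  simpa [ae_iff] using this

variable [OpensMeasurableSpace X]

theorem setLIntegral_annulus_le (hν : HasPolyGrowth ν D d) (hs : 0 ≤ s) (x : X) {t : ℝ≥0∞}
    (ht₀ : t ≠ 0) (ht : t ≠ ⊤) :
    ∫⁻ y in {y | t ≤ edist x y ∧ edist x y ≤ 2 * t}, edist x y ^ (-s) ∂ν ≤
      2 ^ d * D * t ^ (d - s) := by
  have hmeas : MeasurableSet {y | t ≤ edist x y ∧ edist x y ≤ 2 * t} :=
    measurableSet_Icc.preimage (measurable_edist_right (x := x))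
  calc ∫⁻ y in {y | t ≤ edist x y ∧ edist x y ≤ 2 * t}, edist x y ^ (-s) ∂ν
      ≤ ∫⁻ _ in {y | t ≤ edist x y ∧ edist x y ≤ 2 * t}, t ^ (-s) ∂ν :=
        setLIntegral_mono' hmeas fun y hy => rpow_neg_le_rpow_neg hs hy.1
    _ ≤ t ^ (-s) * (D * (2 * t) ^ d) := by
        rw [setLIntegral_const]
        gcongr
        exact (measure_mono fun y hy => mem_closedEBall'.2 hy.2).trans
          (hν x (2 * t) (by simp [ht₀]) (by finiteness))
    _ = 2 ^ d * D * t ^ (d - s) := by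
        rw [ENNReal.mul_rpow_of_ne_top ofNat_ne_top ht, sub_eq_add_neg, ENNReal.rpow_add _ _ ht₀ ht]
        ring

theorem setLIntegral_iUnion_annulus_le (hν : HasPolyGrowth ν D d) (hs : 0 ≤ s) (x : X)
    {t θ : ℝ≥0∞} (ht₀ : t ≠ 0) (ht : t ≠ ⊤) (hθ₀ : θ ≠ 0) (hθ : θ ≠ ⊤) :
    ∫⁻ y in ⋃ k : ℕ, {y | t * θ ^ k ≤ edist x y ∧ edist x y ≤ 2 * (t * θ ^ k)},
      edist x y ^ (-s) ∂ν ≤ 2 ^ d * D * (1 - θ ^ (d - s))⁻¹ * t ^ (d - s) := by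
  calc _ ≤ ∑' k : ℕ, ∫⁻ y in {y | t * θ ^ k ≤ edist x y ∧ edist x y ≤ 2 * (t * θ ^ k)},
          edist x y ^ (-s) ∂ν := lintegral_iUnion_le _ _
    _ ≤ ∑' k : ℕ, 2 ^ d * D * t ^ (d - s) * (θ ^ (d - s)) ^ k := by
        refine ENNReal.tsum_le_tsum fun k => ?_
        refine (hν.setLIntegral_annulus_le hs x (mul_ne_zero ht₀ (pow_ne_zero k hθ₀))
          (by finiteness)).trans_eq ?_
        rw [mul_pow_rpow ht hθ, mul_assoc _ (t ^ _)]
    _ = _ := by rw [ENNReal.tsum_mul_left, ENNReal.tsum_geometric]; ring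

variable (D) in
theorem exists_setLIntegral_closedEBall_le (hs : 0 ≤ s) (hsd : s < d) :
    ∃ C : ℝ≥0, ∀ ν : Measure X, HasPolyGrowth ν D d → ∀ (x : X) (r : ℝ≥0∞), r ≠ 0 → r ≠ ⊤ →
      ∫⁻ y in closedEBall x r, edist x y ^ (-s) ∂ν ≤ C * r ^ (d - s) := by
  have hratio : 1 - (2⁻¹ : ℝ≥0∞) ^ (d - s) ≠ 0 :=
    (tsub_pos_of_lt (ENNReal.rpow_lt_one (by simp) (by linarith))).ne'
  have hK : 2 ^ d * D * (1 - (2⁻¹ : ℝ≥0∞) ^ (d - s))⁻¹ * 2⁻¹ ^ (d - s) ≠ ⊤ := by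
    have : (1 - (2⁻¹ : ℝ≥0∞) ^ (d - s))⁻¹ ≠ ⊤ := ENNReal.inv_ne_top.2 hratio
    finiteness
  obtain ⟨C, hC⟩ : ∃ C : ℝ≥0, (C : ℝ≥0∞) = _ := ⟨_, coe_toNNReal hK⟩
  refine ⟨C, fun ν hν x r hr₀ hr => ?_⟩
  rw [hC]
  have hcover : closedEBall x r ≤ᵐ[ν]
      ⋃ k : ℕ, {y | r / 2 * 2⁻¹ ^ k ≤ edist x y ∧ edist x y ≤ 2 * (r / 2 * 2⁻¹ ^ k)} := by
    filter_upwards [hν.ae_edist_ne_zero (hs.trans_lt hsd) x] with y hy hyr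
    exact mem_iUnion.2 (exists_mul_half_pow_le_le hy (by finiteness)
      ((mem_closedEBall'.1 hyr).trans_eq (ENNReal.mul_div_cancel two_ne_zero ofNat_ne_top).symm))
  calc _ ≤ _ := lintegral_mono_set' hcover
    _ ≤ _ := hν.setLIntegral_iUnion_annulus_le hs x (by simp [hr₀]) (by finiteness)
        (by simp) (by simp)
    _ = _ := by
        rw [div_eq_mul_inv, ENNReal.mul_rpow_of_ne_top hr (by simp)]
        ring

variable (D) in
theorem exists_setLIntegral_compl_eball_le (hs : 0 ≤ s) (hds : d < s) :
    ∃ C : ℝ≥0, ∀ ν : Measure X, HasPolyGrowth ν D d → ∀ (x : X) (r : ℝ≥0∞), r ≠ 0 → r ≠ ⊤ →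
      ∫⁻ y in (eball x r)ᶜ, edist x y ^ (-s) ∂ν ≤ C * r ^ (d - s) := by
  have hratio : 1 - (2 : ℝ≥0∞) ^ (d - s) ≠ 0 :=
    (tsub_pos_of_lt (ENNReal.rpow_lt_one_of_one_lt_of_neg one_lt_two (by linarith))).ne'
  have hK : 2 ^ d * D * (1 - (2 : ℝ≥0∞) ^ (d - s))⁻¹ ≠ ⊤ := by
    have : (1 - (2 : ℝ≥0∞) ^ (d - s))⁻¹ ≠ ⊤ := ENNReal.inv_ne_top.2 hratio
    finiteness
  obtain ⟨C, hC⟩ : ∃ C : ℝ≥0, (C : ℝ≥0∞) = _ := ⟨_, coe_toNNReal hK⟩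
  refine ⟨C, fun ν hν x r hr₀ hr => ?_⟩
  rw [hC]
  have hcover : (eball x r)ᶜ ⊆
      ⋃ k : ℕ, {y | r * 2 ^ k ≤ edist x y ∧ edist x y ≤ 2 * (r * 2 ^ k)} := fun y hy =>
    mem_iUnion.2 (exists_mul_two_pow_le_le hr₀ (edist_ne_top x y)
      (by simpa [edist_comm y] using hy))
  exact (lintegral_mono_set hcover).trans
    (hν.setLIntegral_iUnion_annulus_le hs x hr₀ hr (by simp) (by simp))

end HasPolyGrowth

theorem le_add_rpow_mul_rpow {z l : ℝ≥0∞} {q : ℝ} (hl₀ : l ≠ 0) (hl : l ≠ ⊤) (hq : 1 ≤ q) :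
    z ≤ l + l ^ (1 - q) * z ^ q := by
  rcases le_total z l with hzl | hlz
  · exact hzl.trans le_self_add
  refine le_add_of_le_right ?_
  rcases eq_or_ne z ⊤ with rfl | hz
  · rw [ENNReal.top_rpow_of_pos (by linarith), ENNReal.mul_top (by positivity)]
  have hz₀ : z ≠ 0 := ne_bot_of_le_ne_bot hl₀ hlz
  calc z = z ^ (-(q - 1)) * z ^ q := by rw [← ENNReal.rpow_add _ _ hz₀ hz]; simp
    _ ≤ l ^ (-(q - 1)) * z ^ q := by gcongr ?_ * _; exact rpow_neg_le_rpow_neg (by linarith) hlz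
    _ = l ^ (1 - q) * z ^ q := by rw [neg_sub]

variable {n β q : ℝ} {μ : Measure X} {E : ℝ≥0} {z : X → ℝ≥0∞}

theorem HasPolyGrowth.withDensity_max_sq_rpow {u w : X → ℝ≥0} {A B : ℝ≥0} (hu : Measurable u)
    (hA : HasPolyGrowth (μ.withDensity fun y => (u y : ℝ≥0∞) ^ (2 * q)) A d)
    (hB : HasPolyGrowth (μ.withDensity fun y => (w y : ℝ≥0∞) ^ (2 * q)) B d) :
    HasPolyGrowth (μ.withDensity fun y => ((max (u y) (w y) : ℝ≥0) ^ 2 : ℝ≥0∞) ^ q) (A + B) d := by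
  intro x t ht₀ ht
  have hmax : ∀ y, ((max (u y) (w y) : ℝ≥0) ^ 2 : ℝ≥0∞) ^ q ≤
      (u y : ℝ≥0∞) ^ (2 * q) + (w y : ℝ≥0∞) ^ (2 * q) := by
    intro y
    rw [← ENNReal.rpow_two, ← ENNReal.rpow_mul]
    rcases max_choice (u y) (w y) with h | h <;> rw [h]
    exacts [le_self_add, le_add_self]
  calc _ ≤ μ.withDensity ((fun y => (u y : ℝ≥0∞) ^ (2 * q)) + fun y => (w y : ℝ≥0∞) ^ (2 * q))
          (closedEBall x t) := withDensity_mono (Eventually.of_forall hmax) _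
    _ ≤ A * t ^ d + B * t ^ d := by
        rw [withDensity_add_left (by fun_prop)]
        exact add_le_add (hA x t ht₀ ht) (hB x t ht₀ ht)
    _ = (A + B : ℝ≥0) * t ^ d := by
        push_cast
        ring

theorem HasPolyGrowth.withDensity_inv_mul_rpow {u : X → ℝ≥0} {A : ℝ≥0}
    (h : HasPolyGrowth (μ.withDensity fun y => (u y : ℝ≥0∞) ^ s) (E * A ^ s) d)
    (hu : Measurable u) (hA : A ≠ 0) (hs : 0 ≤ s) :
    HasPolyGrowth (μ.withDensity fun y => ((A⁻¹ * u y : ℝ≥0) : ℝ≥0∞) ^ s) E d := by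
  intro x t ht₀ ht
  have hscale : (fun y => ((A⁻¹ * u y : ℝ≥0) : ℝ≥0∞) ^ s) =
      ((A⁻¹ ^ s : ℝ≥0) : ℝ≥0∞) • fun y => (u y : ℝ≥0∞) ^ s := by
    ext y
    rw [coe_mul, ENNReal.mul_rpow_of_nonneg _ _ hs, ENNReal.coe_rpow_of_nonneg _ hs, Pi.smul_apply,
      smul_eq_mul]
  rw [hscale, withDensity_smul _ (by fun_prop), Measure.smul_apply, smul_eq_mul]
  refine (mul_le_mul_right (h x t ht₀ ht) _).trans_eq ?_
  rw [← mul_assoc, ← coe_mul, mul_left_comm, ← NNReal.mul_rpow, inv_mul_cancel₀ hA,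
    NNReal.one_rpow, mul_one]

theorem HasPolyGrowth.ae_eq_zero_of_withDensity_rpow {u : X → ℝ≥0}
    (h : HasPolyGrowth (μ.withDensity fun y => (u y : ℝ≥0∞) ^ s) 0 d) (hu : Measurable u)
    (hs : 0 < s) : u =ᵐ[μ] 0 := by
  filter_upwards [(withDensity_eq_zero_iff (by fun_prop)).1 h.eq_zero] with y hy
  exact coe_eq_zero.1 ((ENNReal.rpow_eq_zero_iff_of_pos hs).1 hy)

section

variable [OpensMeasurableSpace X]

theorem HasPolyGrowth.withDensity_of_rpow (hμ : HasPolyGrowth μ D n) (hq : 1 ≤ q)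
    (hz : HasPolyGrowth (μ.withDensity fun y => z y ^ q) E (n - β * q)) :
    HasPolyGrowth (μ.withDensity z) (D + E) (n - β) := by
  intro x t ht₀ ht
  have hball : MeasurableSet (closedEBall x t) := isClosed_closedEBall.measurableSet
  have hzq : ∫⁻ y in closedEBall x t, z y ^ q ∂μ ≤ E * t ^ (n - β * q) := by
    simpa only [withDensity_apply _ hball] using hz x t ht₀ ht
  rw [withDensity_apply _ hball]
  calc ∫⁻ y in closedEBall x t, z y ∂μ
      ≤ ∫⁻ y in closedEBall x t, (t ^ (-β) + (t ^ (-β)) ^ (1 - q) * z y ^ q) ∂μ :=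
        lintegral_mono fun y => le_add_rpow_mul_rpow (by positivity) (by finiteness) hq
    _ = t ^ (-β) * μ (closedEBall x t) +
          (t ^ (-β)) ^ (1 - q) * ∫⁻ y in closedEBall x t, z y ^ q ∂μ := by
        rw [lintegral_add_left measurable_const, lintegral_const_mul' _ _ (by finiteness),
          setLIntegral_const]
    _ ≤ t ^ (-β) * (D * t ^ n) + (t ^ (-β)) ^ (1 - q) * (E * t ^ (n - β * q)) := by
        gcongr
        exact hμ x t ht₀ ht
    _ = D * t ^ (-β + n) + E * t ^ (-β * (1 - q) + (n - β * q)) := by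
        rw [← ENNReal.rpow_mul, ENNReal.rpow_add _ _ ht₀ ht, ENNReal.rpow_add _ _ ht₀ ht]
        ring
    _ = (D + E : ℝ≥0) * t ^ (n - β) := by
        push_cast
        ring_nf

variable {a b : ℝ}

theorem setLIntegral_eball_half_edist_le (ha : 0 ≤ a) (x v : X) :
    ∫⁻ y in eball v (edist x v / 2), edist x y ^ (-a) * edist v y ^ (-b) ∂ν ≤
      (edist x v / 2) ^ (-a) * ∫⁻ y in closedEBall v (edist x v / 2), edist v y ^ (-b) ∂ν := by
  rw [← lintegral_const_mul _ (by fun_prop)]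
  refine (setLIntegral_mono' isOpen_eball.measurableSet fun y hy => ?_).trans
    (lintegral_mono_set eball_subset_closedEBall)
  gcongr ?_ * _
  exact rpow_neg_le_rpow_neg ha (half_edist_le_of_edist_le_half (mem_eball'.1 hy).le)

theorem setLIntegral_closedEBall_edist_le_of_notMem_eball {o v : X} {r : ℝ≥0∞} (hs : 0 ≤ s)
    (hv : v ∉ eball o (2 * r)) :
    ∫⁻ y in closedEBall o r, edist v y ^ (-s) ∂μ ≤
      2 ^ s * μ (closedEBall o r) * edist o v ^ (-s) := by
  have hr : r ≤ edist v o / 2 := by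
    rw [ENNReal.le_div_iff_mul_le (by simp) (by simp), mul_comm]
    simpa using hv
  calc ∫⁻ y in closedEBall o r, edist v y ^ (-s) ∂μ
      ≤ ∫⁻ _ in closedEBall o r, (edist v o / 2) ^ (-s) ∂μ :=
        setLIntegral_mono' isClosed_closedEBall.measurableSet fun y hy => rpow_neg_le_rpow_neg hs
          (half_edist_le_of_edist_le_half ((mem_closedEBall'.1 hy).trans hr))
    _ = 2 ^ s * μ (closedEBall o r) * edist o v ^ (-s) := by
        rw [setLIntegral_const, div_two_rpow_neg (edist_ne_top v o), edist_comm v]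
        ring

theorem setLIntegral_compl_eball_inter_closedEBall_le (hb : 0 ≤ b) (x v : X) (r : ℝ≥0∞) :
    ∫⁻ y in (eball v r)ᶜ ∩ closedEBall x (edist x v), edist x y ^ (-a) * edist v y ^ (-b) ∂ν ≤
      r ^ (-b) * ∫⁻ y in closedEBall x (edist x v), edist x y ^ (-a) ∂ν := by
  rw [← lintegral_const_mul _ (by fun_prop)]
  refine (setLIntegral_mono' (isOpen_eball.measurableSet.compl.inter
    isClosed_closedEBall.measurableSet) fun y hy => ?_).trans
    (lintegral_mono_set inter_subset_right)
  rw [mul_comm]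
  gcongr ?_ * _
  refine rpow_neg_le_rpow_neg hb ?_
  simpa [edist_comm y] using hy.1

theorem setLIntegral_compl_eball_diff_closedEBall_le (ha : 0 ≤ a) (x v : X) {r : ℝ≥0∞}
    (hr : r ≠ 0) :
    ∫⁻ y in (eball v r)ᶜ \ closedEBall x (edist x v), edist x y ^ (-a) * edist v y ^ (-b) ∂ν ≤
      2 ^ a * ∫⁻ y in (eball v r)ᶜ, edist v y ^ (-(a + b)) ∂ν := by
  rw [← lintegral_const_mul _ (by fun_prop)]
  refine (setLIntegral_mono' (isOpen_eball.measurableSet.compl.diff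
    isClosed_closedEBall.measurableSet) fun y hy => ?_).trans (lintegral_mono_set sdiff_subset)
  have hfar : edist x v ≤ edist x y :=
    (lt_of_not_ge (mem_closedEBall'.not.1 hy.2)).le
  have hvy₀ : edist v y ≠ 0 := ne_bot_of_le_ne_bot hr (by simpa [edist_comm y] using hy.1)
  have hhalf : edist v y / 2 ≤ edist x y := by
    refine ENNReal.div_le_of_le_mul ?_
    rw [mul_two]
    exact (edist_triangle_left v y x).trans (by gcongr)
  calc edist x y ^ (-a) * edist v y ^ (-b) ≤ (edist v y / 2) ^ (-a) * edist v y ^ (-b) := by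
        gcongr ?_ * _
        exact rpow_neg_le_rpow_neg ha hhalf
    _ = 2 ^ a * edist v y ^ (-(a + b)) := by
        rw [div_two_rpow_neg (edist_ne_top v y), mul_assoc, neg_add,
          ENNReal.rpow_add _ _ hvy₀ (edist_ne_top v y)]

variable (D) in
theorem exists_lintegral_edist_mul_edist_le (hb : 0 < b) (hba : b < a) :
    ∃ C : ℝ≥0, ∀ ν : Measure X, HasPolyGrowth ν D a → ∀ x v : X, edist x v ≠ 0 →
      ∫⁻ y, edist x y ^ (-a) * edist v y ^ (-b) ∂ν ≤
        C * edist x v ^ (-b) * (1 + ∫⁻ y in closedEBall x (edist x v), edist x y ^ (-a) ∂ν) := by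
  obtain ⟨C₁, hC₁⟩ := HasPolyGrowth.exists_setLIntegral_closedEBall_le (X := X) D hb.le hba
  obtain ⟨C₂, hC₂⟩ := HasPolyGrowth.exists_setLIntegral_compl_eball_le (X := X) D (d := a)
    (s := a + b) (by linarith) (by linarith)
  refine ⟨(C₁ + 2 ^ a * C₂ + 1) * 2 ^ b, fun ν hν x v hxv => ?_⟩
  set r := edist x v / 2 with hr
  have hr₀ : r ≠ 0 := by simpa [hr] using hxv
  have hr_top : r ≠ ⊤ := ENNReal.div_ne_top (edist_ne_top x v) two_ne_zero
  set J := ∫⁻ y in closedEBall x (edist x v), edist x y ^ (-a) ∂ν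
  calc ∫⁻ y, edist x y ^ (-a) * edist v y ^ (-b) ∂ν
      = ∫⁻ y in eball v r, edist x y ^ (-a) * edist v y ^ (-b) ∂ν +
        (∫⁻ y in (eball v r)ᶜ ∩ closedEBall x (edist x v), edist x y ^ (-a) * edist v y ^ (-b) ∂ν +
        ∫⁻ y in (eball v r)ᶜ \ closedEBall x (edist x v),
          edist x y ^ (-a) * edist v y ^ (-b) ∂ν) := by
        rw [lintegral_inter_add_sdiff _ _ isClosed_closedEBall.measurableSet,
          lintegral_add_compl _ isOpen_eball.measurableSet]
    _ ≤ r ^ (-a) * (C₁ * r ^ (a - b)) + (r ^ (-b) * J + 2 ^ a * (C₂ * r ^ (a - (a + b)))) := by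
        gcongr
        · refine (setLIntegral_eball_half_edist_le (by linarith) x v).trans ?_
          gcongr
          exact hC₁ ν hν v r hr₀ hr_top
        · exact setLIntegral_compl_eball_inter_closedEBall_le hb.le x v r
        · refine (setLIntegral_compl_eball_diff_closedEBall_le (by linarith) x v hr₀).trans ?_
          gcongr
          exact hC₂ ν hν v r hr₀ hr_top
    _ = r ^ (-b) * (C₁ + 2 ^ a * C₂ + J) := by
        have hsplit : r ^ (-a) * r ^ (a - b) = r ^ (-b) := by
          rw [← ENNReal.rpow_add _ _ hr₀ hr_top, show -a + (a - b) = -b by ring]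
        rw [mul_left_comm, hsplit, sub_add_cancel_left]
        ring
    _ ≤ r ^ (-b) * ((C₁ + 2 ^ a * C₂ + 1) * (1 + J)) := by
        gcongr
        rw [mul_one_add, add_one_mul _ J]
        exact add_le_add le_self_add le_add_self
    _ = ((C₁ + 2 ^ a * C₂ + 1) * 2 ^ b : ℝ≥0) * edist x v ^ (-b) * (1 + J) := by
        rw [hr, div_two_rpow_neg (edist_ne_top x v)]
        push_cast [ENNReal.coe_rpow_of_ne_zero (two_ne_zero' ℝ≥0)]
        ring

end

theorem exists_setLIntegral_closedEBall_withDensity_le [OpensMeasurableSpace X] {η : ℝ}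
    (hμ : HasPolyGrowth μ D n) (hη : 0 < η) (hηn : η ≤ n) (hq : 1 ≤ q) :
    ∃ C : ℝ≥0, ∀ z : X → ℝ≥0∞, Measurable z → ∀ (x : X) (r : ℝ≥0∞), r ≠ 0 → r ≠ ⊤ →
      ∫⁻ y in closedEBall x r, edist x y ^ (-(n - β)) ∂μ.withDensity z ≤
        C + r ^ (η * (q - 1)) * ∫⁻ y in closedEBall x r,
          edist x y ^ (-(n - β * q + η * (q - 1))) ∂μ.withDensity fun y => z y ^ q := by
  obtain ⟨C, hC⟩ := HasPolyGrowth.exists_setLIntegral_closedEBall_le (X := X) D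
    (sub_nonneg.2 hηn) (sub_lt_self n hη)
  refine ⟨C, fun z hz x r hr₀ hr => ?_⟩
  have hball : MeasurableSet (closedEBall x r) := isClosed_closedEBall.measurableSet
  -- Truncating `z` at the level `edist x y ^ (η - β) * r ^ (-η)` makes the lower part integrable
  -- against the kernel, with a bound that does not depend on `r`.
  have hpointwise : ∀ᵐ y ∂μ, z y * edist x y ^ (-(n - β)) ≤
      r ^ (-η) * edist x y ^ (-(n - η)) +
        r ^ (η * (q - 1)) * (z y ^ q * edist x y ^ (-(n - β * q + η * (q - 1)))) := by
    filter_upwards [hμ.ae_edist_ne_zero (hη.trans_le hηn) x] with y hy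
    have hy_top : edist x y ≠ ⊤ := edist_ne_top x y
    have hl_top : edist x y ^ (η - β) ≠ ⊤ := by finiteness
    have htrunc := le_add_rpow_mul_rpow (z := z y) (l := edist x y ^ (η - β) * r ^ (-η))
      (by positivity) (by finiteness) hq
    rw [ENNReal.mul_rpow_of_ne_top hl_top (by finiteness), ← ENNReal.rpow_mul,
      ← ENNReal.rpow_mul, show -η * (1 - q) = η * (q - 1) by ring] at htrunc
    refine (mul_le_mul_left htrunc _).trans_eq ?_
    rw [show -(n - η) = (η - β) + -(n - β) by ring,
      show -(n - β * q + η * (q - 1)) = (η - β) * (1 - q) + -(n - β) by ring,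
      ENNReal.rpow_add _ _ hy hy_top, ENNReal.rpow_add _ _ hy hy_top]
    ring
  rw [setLIntegral_withDensity_eq_setLIntegral_mul _ hz (by fun_prop) hball,
    setLIntegral_withDensity_eq_setLIntegral_mul _ (by fun_prop) (by fun_prop) hball]
  calc _ ≤ _ := lintegral_mono_ae (ae_restrict_of_ae hpointwise)
    _ = r ^ (-η) * ∫⁻ y in closedEBall x r, edist x y ^ (-(n - η)) ∂μ +
        r ^ (η * (q - 1)) * ∫⁻ y in closedEBall x r,
          z y ^ q * edist x y ^ (-(n - β * q + η * (q - 1))) ∂μ := by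
        rw [lintegral_add_left (by fun_prop), lintegral_const_mul _ (by fun_prop),
          lintegral_const_mul _ (by fun_prop)]
    _ ≤ r ^ (-η) * (C * r ^ (n - (n - η))) + _ := by
        gcongr
        exact hC μ hμ x r hr₀ hr
    _ = C + _ := by
        rw [mul_left_comm, ← ENNReal.rpow_add _ _ hr₀ hr]
        simp

variable {τ : ℝ}

variable (D) in
theorem exists_lintegral_mul_setLIntegral_closedEBall_le [OpensMeasurableSpace X] (hs : 0 ≤ s)
    (hτs : τ < s) : ∃ C : ℝ≥0, ∀ ν : Measure X, [SFinite ν] → HasPolyGrowth ν D τ →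
      ∀ x : X, (∀ᵐ y ∂ν, edist x y ≠ 0) → ∀ f : X → ℝ≥0∞, Measurable f →
      ∫⁻ v, edist x v ^ (-s) * ∫⁻ y in closedEBall x (edist x v), f y ∂ν ∂ν ≤
        C * ∫⁻ y, f y * edist x y ^ (τ - s) ∂ν := by
  obtain ⟨C, hC⟩ := HasPolyGrowth.exists_setLIntegral_compl_eball_le (X := X) D hs hτs
  refine ⟨C, fun ν _ hν x hx f hf => ?_⟩
  let S : Set (X × X) := {p | edist x p.2 ≤ edist x p.1}
  have hS : MeasurableSet S := measurableSet_le (by fun_prop) (by fun_prop)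
  have hmeas : Measurable (S.indicator fun p => edist x p.1 ^ (-s) * f p.2) :=
    Measurable.indicator (by fun_prop) hS
  calc ∫⁻ v, edist x v ^ (-s) * ∫⁻ y in closedEBall x (edist x v), f y ∂ν ∂ν
      = ∫⁻ v, ∫⁻ y, S.indicator (fun p => edist x p.1 ^ (-s) * f p.2) (v, y) ∂ν ∂ν := by
        refine lintegral_congr fun v => ?_
        rw [← lintegral_const_mul _ hf, ← lintegral_indicator isClosed_closedEBall.measurableSet]
        simp only [S, indicator, mem_closedEBall', mem_ofPred_eq]
    _ = ∫⁻ y, ∫⁻ v, S.indicator (fun p => edist x p.1 ^ (-s) * f p.2) (v, y) ∂ν ∂ν :=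
        lintegral_lintegral_swap hmeas.aemeasurable
    _ = ∫⁻ y, f y * ∫⁻ v in (eball x (edist x y))ᶜ, edist x v ^ (-s) ∂ν ∂ν := by
        refine lintegral_congr fun y => ?_
        rw [← lintegral_const_mul _ (by fun_prop),
          ← lintegral_indicator isOpen_eball.measurableSet.compl]
        simp only [S, indicator, mem_compl_iff, mem_eball', not_lt, mem_ofPred_eq, mul_comm]
    _ ≤ ∫⁻ y, C * (f y * edist x y ^ (τ - s)) ∂ν := by
        refine lintegral_mono_ae ?_
        filter_upwards [hx] with y hy
        rw [mul_left_comm]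
        gcongr
        exact hC ν hν x (edist x y) hy (edist_ne_top x y)
    _ = C * ∫⁻ y, f y * edist x y ^ (τ - s) ∂ν := lintegral_const_mul _ (by fun_prop)

/-- The potential `∫ |x - y| ^ (-s) dν(y)`; on an `n`-dimensional space it is the Riesz potential
of order `n - s` of the measure `ν`. It serves as the test function in the Schur test. -/
def rieszPotential (s : ℝ) (ν : Measure X) (x : X) : ℝ≥0∞ :=
  ∫⁻ y, edist x y ^ (-s) ∂ν

theorem rieszPotential_ne_zero [OpensMeasurableSpace X] (hs : 0 ≤ s) (hν : ν ≠ 0) (x : X) :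
    rieszPotential s ν x ≠ 0 := by
  have hpos : ∀ y, edist x y ^ (-s) ≠ 0 := fun y h => by
    simp [ENNReal.rpow_eq_zero_iff, edist_ne_top, hs.not_gt] at h
  rw [rieszPotential, Ne, lintegral_eq_zero_iff (by fun_prop)]
  intro h
  have : NeBot (ae ν) := ae_neBot.2 hν
  obtain ⟨y, hy⟩ := h.exists
  exact hpos y hy

variable [OpensMeasurableSpace X] [SecondCountableTopology X]

theorem measurable_rieszPotential [SFinite ν] : Measurable (rieszPotential s ν) :=
  Measurable.lintegral_prod_right' (f := fun p : X × X => edist p.1 p.2 ^ (-s)) (by fun_prop)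

theorem lintegral_mul_rieszPotential [SFinite μ] [SFinite ν] {f : X → ℝ≥0∞} (hf : Measurable f) :
    ∫⁻ y, f y * rieszPotential s ν y ∂μ = ∫⁻ v, ∫⁻ y, f y * edist v y ^ (-s) ∂μ ∂ν := by
  calc ∫⁻ y, f y * rieszPotential s ν y ∂μ
      = ∫⁻ y, ∫⁻ v, f y * edist v y ^ (-s) ∂ν ∂μ := by
        refine lintegral_congr fun y => ?_
        rw [rieszPotential, ← lintegral_const_mul _ (by fun_prop)]
        simp only [edist_comm y]
    _ = ∫⁻ v, ∫⁻ y, f y * edist v y ^ (-s) ∂μ ∂ν :=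
        lintegral_lintegral_swap (Measurable.aemeasurable (by fun_prop))

theorem exists_lintegral_edist_mul_rieszPotential_le [SFinite μ] (hμ : HasPolyGrowth μ D n)
    (hβ : 0 < β) (hq : 1 < q) (hqn : β * q ≤ n) (E : ℝ≥0) :
    ∃ C : ℝ≥0, ∀ z : X → ℝ≥0∞, Measurable z →
      HasPolyGrowth (μ.withDensity fun y => z y ^ q) E (n - β * q) → ∀ x : X,
      ∫⁻ y, edist x y ^ (-(n - β)) *
        rieszPotential (n - β * (q + 1) / 2) (μ.withDensity fun y => z y ^ q) y
          ∂μ.withDensity z ≤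
      C * rieszPotential (n - β * (q + 1) / 2) (μ.withDensity fun y => z y ^ q) x := by
  have hβn : β < n := (lt_mul_of_one_lt_right hβ hq).trans_le hqn
  have hβq : 0 < β * (q - 1) := mul_pos hβ (sub_pos.2 hq)
  set b := n - β * (q + 1) / 2 with hb
  set e := β / 4 * (q - 1) with he
  obtain ⟨C₁, hC₁⟩ := exists_lintegral_edist_mul_edist_le (X := X) (D + E) (a := n - β) (b := b)
    (by linarith) (by linarith)
  obtain ⟨C₂, hC₂⟩ := exists_setLIntegral_closedEBall_withDensity_le (β := β) (η := β / 4) hμ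
    (by linarith) (by linarith) hq.le
  obtain ⟨C₃, hC₃⟩ := exists_lintegral_mul_setLIntegral_closedEBall_le (X := X) E
    (τ := n - β * q) (s := b - e) (by linarith) (by linarith)
  refine ⟨C₁ * (1 + C₂) + C₁ * C₃, fun z hz hzq x => ?_⟩
  set ω := μ.withDensity fun y => z y ^ q
  have hx : ∀ᵐ v ∂ω, edist x v ≠ 0 :=
    (withDensity_absolutelyContinuous _ _).ae_le (hμ.ae_edist_ne_zero (hβ.trans hβn) x)
  have hpointwise : ∀ᵐ v ∂ω,
      ∫⁻ y, edist x y ^ (-(n - β)) * edist v y ^ (-b) ∂μ.withDensity z ≤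
        C₁ * (1 + C₂) * edist x v ^ (-b) + C₁ * (edist x v ^ (-(b - e)) *
          ∫⁻ y in closedEBall x (edist x v), edist x y ^ (-(n - β * q + e)) ∂ω) := by
    filter_upwards [hx] with v hv
    refine (hC₁ _ (hμ.withDensity_of_rpow hq.le hzq) x v hv).trans ?_
    refine (mul_le_mul_right (add_le_add_right (hC₂ z hz x _ hv (edist_ne_top x v)) 1)
      _).trans_eq ?_
    rw [show -(b - e) = -b + e by ring, ENNReal.rpow_add _ _ hv (edist_ne_top x v)]
    ring
  have hpotential : ∫⁻ y, edist x y ^ (-(n - β * q + e)) * edist x y ^ (n - β * q - (b - e)) ∂ω =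
      rieszPotential b ω x := by
    refine lintegral_congr_ae ?_
    filter_upwards [hx] with y hy
    rw [← ENNReal.rpow_add _ _ hy (edist_ne_top x y), hb, he]
    ring_nf
  calc _ = ∫⁻ v, ∫⁻ y, edist x y ^ (-(n - β)) * edist v y ^ (-b) ∂μ.withDensity z ∂ω :=
        lintegral_mul_rieszPotential (by fun_prop)
    _ ≤ _ := lintegral_mono_ae hpointwise
    _ = C₁ * (1 + C₂) * rieszPotential b ω x + C₁ * ∫⁻ v, edist x v ^ (-(b - e)) *
          ∫⁻ y in closedEBall x (edist x v), edist x y ^ (-(n - β * q + e)) ∂ω ∂ω := by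
        rw [lintegral_add_left (by fun_prop), lintegral_const_mul _ (by fun_prop),
          lintegral_const_mul' _ _ coe_ne_top, rieszPotential]
    _ ≤ C₁ * (1 + C₂) * rieszPotential b ω x + C₁ * (C₃ * rieszPotential b ω x) := by
        gcongr
        exact (hC₃ ω hzq x hx _ (by fun_prop)).trans_eq (by rw [hpotential])
    _ = _ := by
        push_cast
        ring

theorem HasPolyGrowth.setLIntegral_rieszPotential_lt_top [SFinite μ] [SFinite ν]
    (hμ : HasPolyGrowth μ D n) (hν : HasPolyGrowth ν E τ) (hs : 0 ≤ s) (hτs : τ < s) (hsn : s < n)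
    (o : X) {r : ℝ≥0∞} (hr₀ : r ≠ 0) (hr : r ≠ ⊤) :
    ∫⁻ y in closedEBall o r, rieszPotential s ν y ∂μ < ⊤ := by
  obtain ⟨C₁, hC₁⟩ := HasPolyGrowth.exists_setLIntegral_closedEBall_le (X := X) D hs hsn
  obtain ⟨C₂, hC₂⟩ := HasPolyGrowth.exists_setLIntegral_compl_eball_le (X := X) E hs hτs
  have hball : MeasurableSet (eball o (2 * r)) := isOpen_eball.measurableSet
  have hnear : ∀ v ∈ eball o (2 * r),
      ∫⁻ y in closedEBall o r, edist v y ^ (-s) ∂μ ≤ C₁ * (3 * r) ^ (n - s) := by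
    intro v hv
    refine (lintegral_mono_set fun y hy => ?_).trans
      (hC₁ μ hμ v (3 * r) (by simp [hr₀]) (by finiteness))
    calc edist y v ≤ edist y o + edist v o := edist_triangle_right y v o
      _ ≤ r + 2 * r := add_le_add hy (mem_eball.1 hv).le
      _ = 3 * r := by ring
  calc ∫⁻ y in closedEBall o r, rieszPotential s ν y ∂μ
      = ∫⁻ v, ∫⁻ y in closedEBall o r, edist v y ^ (-s) ∂μ ∂ν := by
        simpa using lintegral_mul_rieszPotential (μ := μ.restrict (closedEBall o r)) (ν := ν)
          (s := s) (f := 1) measurable_one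
    _ = ∫⁻ v in eball o (2 * r), ∫⁻ y in closedEBall o r, edist v y ^ (-s) ∂μ ∂ν +
        ∫⁻ v in (eball o (2 * r))ᶜ, ∫⁻ y in closedEBall o r, edist v y ^ (-s) ∂μ ∂ν :=
        (lintegral_add_compl _ hball).symm
    _ ≤ ∫⁻ _ in eball o (2 * r), C₁ * (3 * r) ^ (n - s) ∂ν +
        ∫⁻ v in (eball o (2 * r))ᶜ, 2 ^ s * μ (closedEBall o r) * edist o v ^ (-s) ∂ν :=
        add_le_add (setLIntegral_mono' hball hnear) (setLIntegral_mono' hball.compl fun v hv =>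
          setLIntegral_closedEBall_edist_le_of_notMem_eball hs hv)
    _ ≤ C₁ * (3 * r) ^ (n - s) * (E * (2 * r) ^ τ) +
        2 ^ s * (D * r ^ n) * (C₂ * (2 * r) ^ (τ - s)) := by
        rw [setLIntegral_const, lintegral_const_mul _ (by fun_prop)]
        gcongr
        · exact (measure_mono eball_subset_closedEBall).trans
            (hν o _ (by simp [hr₀]) (by finiteness))
        · exact hμ o r hr₀ hr
        · exact hC₂ ν hν o _ (by simp [hr₀]) (by finiteness)
    _ < ⊤ := by
        have h₁ : (2 * r) ≠ 0 := by simp [hr₀]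
        finiteness

theorem HasPolyGrowth.ae_rieszPotential_lt_top [SFinite μ] [SFinite ν]
    (hμ : HasPolyGrowth μ D n) (hν : HasPolyGrowth ν E τ) (hs : 0 ≤ s) (hτs : τ < s) (hsn : s < n) :
    ∀ᵐ y ∂μ, rieszPotential s ν y < ⊤ := by
  rcases isEmpty_or_nonempty X with hX | ⟨⟨o⟩⟩
  · exact Eventually.of_forall fun y => hX.elim y
  rw [← Measure.restrict_univ (μ := μ), ← iUnion_closedEBall_nat_succ o, ae_restrict_iUnion_iff]
  exact fun N => ae_lt_top measurable_rieszPotential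
    (hμ.setLIntegral_rieszPotential_lt_top hν hs hτs hsn o (by simp) (by simp)).ne

theorem exists_lintegral_sq_lintegral_edist_withDensity_le [SFinite μ] (hμ : HasPolyGrowth μ D n)
    (hβ : 0 < β) (hq : 1 < q) (hqn : β * q ≤ n) (E : ℝ≥0) :
    ∃ C : ℝ≥0, ∀ z : X → ℝ≥0∞, Measurable z →
      HasPolyGrowth (μ.withDensity fun y => z y ^ q) E (n - β * q) →
      ∀ f : X → ℝ≥0∞, Measurable f →
      ∫⁻ x, (∫⁻ y, edist x y ^ (-(n - β)) * f y ∂μ.withDensity z) ^ 2 ∂μ.withDensity z ≤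
        C * ∫⁻ y, f y ^ 2 ∂μ.withDensity z := by
  have hβn : β < n := (lt_mul_of_one_lt_right hβ hq).trans_le hqn
  have hβq : 0 < β * (q - 1) := mul_pos hβ (sub_pos.2 hq)
  obtain ⟨C, hC⟩ := exists_lintegral_edist_mul_rieszPotential_le hμ hβ hq hqn E
  refine ⟨C * C, fun z hz hzq f hf => ?_⟩
  rcases eq_or_ne (μ.withDensity fun y => z y ^ q) 0 with hzero | hne
  · have hz₀ : μ.withDensity z = 0 := by
      rw [withDensity_eq_zero_iff (by fun_prop)] at hzero ⊢
      filter_upwards [hzero] with y hy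
      exact (ENNReal.rpow_eq_zero_iff_of_pos (zero_lt_one.trans hq)).1 hy
    simp [hz₀]
  have hfinite := hμ.ae_rieszPotential_lt_top hzq (s := n - β * (q + 1) / 2)
    (by linarith) (by linarith) (by linarith)
  rw [coe_mul]
  exact lintegral_sq_lintegral_mul_le_of_schur (by fun_prop) measurable_rieszPotential
    measurable_rieszPotential hf
    (Eventually.of_forall (rieszPotential_ne_zero (by linarith) hne))
    ((withDensity_absolutelyContinuous μ z).ae_le (hfinite.mono fun _ => LT.lt.ne))
    (hC z hz hzq) (by simpa only [edist_comm] using hC z hz hzq)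

theorem exists_lintegral_sq_mul_lintegral_edist_mul_le [SFinite μ] (hμ : HasPolyGrowth μ D n)
    (hβ : 0 < β) (hq : 1 < q) (hqn : β * q ≤ n) (E : ℝ≥0) :
    ∃ C : ℝ≥0, ∀ u w : X → ℝ≥0, Measurable u → Measurable w →
      HasPolyGrowth (μ.withDensity fun y => (u y : ℝ≥0∞) ^ (2 * q)) E (n - β * q) →
      HasPolyGrowth (μ.withDensity fun y => (w y : ℝ≥0∞) ^ (2 * q)) E (n - β * q) →
      ∀ g : X → ℝ≥0∞, Measurable g →
      ∫⁻ x, (u x * ∫⁻ y, edist x y ^ (-(n - β)) * (w y * g y) ∂μ) ^ 2 ∂μ ≤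
        C * ∫⁻ y, g y ^ 2 ∂μ := by
  obtain ⟨C, hC⟩ := exists_lintegral_sq_lintegral_edist_withDensity_le hμ hβ hq hqn (E + E)
  refine ⟨C, fun u w hu hw huq hwq g hg => ?_⟩
  exact lintegral_sq_mul_lintegral_mul_le_of_sq_le (by fun_prop) (by fun_prop) (by fun_prop) hg
    (fun y => by finiteness)
    (fun y => pow_le_pow_left' (coe_le_coe.2 (le_max_left (u y) (w y))) 2)
    (fun y => pow_le_pow_left' (coe_le_coe.2 (le_max_right (u y) (w y))) 2)
    (hC _ (by fun_prop) (huq.withDensity_max_sq_rpow hu hwq))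

theorem exists_lintegral_sq_mul_lintegral_edist_mul_le_mul_sq [SFinite μ]
    (hμ : HasPolyGrowth μ D n) (hβ : 0 < β) (hq : 1 < q) (hqn : β * q ≤ n) (E : ℝ≥0) :
    ∃ C : ℝ≥0, ∀ (u w : X → ℝ≥0) (A B : ℝ≥0), Measurable u → Measurable w →
      HasPolyGrowth (μ.withDensity fun y => (u y : ℝ≥0∞) ^ (2 * q)) (E * A ^ (2 * q))
        (n - β * q) →
      HasPolyGrowth (μ.withDensity fun y => (w y : ℝ≥0∞) ^ (2 * q)) (E * B ^ (2 * q))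
        (n - β * q) →
      ∀ g : X → ℝ≥0∞, Measurable g →
      ∫⁻ x, (u x * ∫⁻ y, edist x y ^ (-(n - β)) * (w y * g y) ∂μ) ^ 2 ∂μ ≤
        C * (A * B) ^ 2 * ∫⁻ y, g y ^ 2 ∂μ := by
  obtain ⟨C, hC⟩ := exists_lintegral_sq_mul_lintegral_edist_mul_le hμ hβ hq hqn E
  refine ⟨C, fun u w A B hu hw huA hwB g hg => ?_⟩
  have hq₀ : 0 < 2 * q := by linarith
  rcases eq_or_ne A 0 with rfl | hA
  · rw [NNReal.zero_rpow hq₀.ne', mul_zero] at huA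
    refine (lintegral_eq_zero_of_ae_eq_zero ?_).trans_le zero_le
    filter_upwards [huA.ae_eq_zero_of_withDensity_rpow hu hq₀] with x hx
    simp [hx]
  rcases eq_or_ne B 0 with rfl | hB
  · rw [NNReal.zero_rpow hq₀.ne', mul_zero] at hwB
    have hinner : ∀ x, ∫⁻ y, edist x y ^ (-(n - β)) * (w y * g y) ∂μ = 0 := fun x =>
      lintegral_eq_zero_of_ae_eq_zero <| (hwB.ae_eq_zero_of_withDensity_rpow hw hq₀).mono
        fun y hy => by simp [hy]
    simp only [hinner, mul_zero, zero_pow two_ne_zero, lintegral_zero, zero_le]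
  have hscale : ∀ {f : X → ℝ≥0} {c : ℝ≥0}, c ≠ 0 → ∀ y, (f y : ℝ≥0∞) = c * (c⁻¹ * f y : ℝ≥0) :=
    fun hc y => by rw [← coe_mul, mul_inv_cancel_left₀ hc]
  have hcongr : ∀ x, u x * ∫⁻ y, edist x y ^ (-(n - β)) * (w y * g y) ∂μ = A * B *
      ((A⁻¹ * u x : ℝ≥0) * ∫⁻ y, edist x y ^ (-(n - β)) * ((B⁻¹ * w y : ℝ≥0) * g y) ∂μ) := by
    intro x
    rw [hscale hA x, mul_mul_mul_comm, ← lintegral_const_mul (B : ℝ≥0∞) (by fun_prop)]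
    congr 1
    refine lintegral_congr fun y => ?_
    rw [hscale hB y]
    ring
  calc ∫⁻ x, (u x * ∫⁻ y, edist x y ^ (-(n - β)) * (w y * g y) ∂μ) ^ 2 ∂μ
      = (A * B) ^ 2 * ∫⁻ x, ((A⁻¹ * u x : ℝ≥0) *
          ∫⁻ y, edist x y ^ (-(n - β)) * ((B⁻¹ * w y : ℝ≥0) * g y) ∂μ) ^ 2 ∂μ := by
        simp only [hcongr, mul_pow _ _ 2]
        rw [lintegral_const_mul' _ _ (by finiteness)]
    _ ≤ (A * B) ^ 2 * (C * ∫⁻ y, g y ^ 2 ∂μ) := by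
        gcongr
        exact hC _ _ (by fun_prop) (by fun_prop) (huA.withDensity_inv_mul_rpow hu hA hq₀.le)
          (hwB.withDensity_inv_mul_rpow hw hB hq₀.le) g hg
    _ = C * (A * B) ^ 2 * ∫⁻ y, g y ^ 2 ∂μ := by ring

end Growth

section Morrey

theorem hasPolyGrowth_addHaar {F : Type*} [NormedAddCommGroup F] [NormedSpace ℝ F]
    [FiniteDimensional ℝ F] [MeasurableSpace F] [BorelSpace F] (μ : Measure F)
    [μ.IsAddHaarMeasure] :
    HasPolyGrowth μ (μ (ball 0 1)).toNNReal (Module.finrank ℝ F) := by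
  intro x t _ ht
  lift t to ℝ≥0 using ht
  rw [closedEBall_coe, Measure.addHaar_closedBall μ x t.coe_nonneg,
    coe_toNNReal measure_ball_lt_top.ne, ENNReal.rpow_natCast, ENNReal.ofReal_pow t.coe_nonneg,
    ENNReal.ofReal_coe_nnreal, mul_comm]

variable {n : ℕ} {α β p q s : ℝ} {U V : Euc n → ℝ}

theorem volume_cube (a : Fin n → ℝ) (s : ℝ) : volume (cube a s) = ENNReal.ofReal s ^ n := by
  have hpreimage : cube a s = (MeasurableEquiv.toLp 2 (Fin n → ℝ)).symm ⁻¹'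
      Icc a (fun i => a i + s) := by
    ext x
    exact forall_and
  rw [hpreimage, (EuclideanSpace.volume_preserving_symm_measurableEquiv_toLp
    (Fin n)).measure_preimage measurableSet_Icc.nullMeasurableSet, Real.volume_Icc_pi]
  simp

theorem closedBall_subset_cube (x : Euc n) (r : ℝ) :
    closedBall x r ⊆ cube (fun i => x i - r) (2 * r) := by
  intro y hy i
  have hyi : |y i - x i| ≤ r :=
    (PiLp.norm_apply_le (y - x) i).trans ((dist_eq_norm y x).symm.trans_le hy)
  constructor <;> linarith [abs_le.1 hyi]

theorem morrey_mono (hp : 0 ≤ p) (hU : 0 ≤ U) (hUV : U ≤ V) : morrey n α p U ≤ morrey n α p V := by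
  unfold morrey
  gcongr with a s _ y
  · exact hU y
  · exact hUV y

theorem setLIntegral_cube_rpow_le (hn : n ≠ 0) (hp : 0 < p) (hV : 0 ≤ V) (a : Fin n → ℝ)
    (hs : 0 < s) :
    ∫⁻ y in cube a s, ENNReal.ofReal (V y) ^ p ≤
      morrey n α p V ^ p * ENNReal.ofReal s ^ (n - α * p) := by
  have hn' : (n : ℝ) ≠ 0 := Nat.cast_ne_zero.2 hn
  set ℓ := ENNReal.ofReal s
  have hℓ₀ : ℓ ≠ 0 := (ENNReal.ofReal_pos.2 hs).ne'
  have hℓ : ℓ ≠ ⊤ := ENNReal.ofReal_ne_top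
  set I := ∫⁻ y in cube a s, ENNReal.ofReal (V y) ^ p with hI
  have hsup : (ℓ ^ n) ^ (α / n) * ((ℓ ^ n)⁻¹ * I) ^ (1 / p) ≤ morrey n α p V := by
    simp only [hI, ENNReal.ofReal_rpow_of_nonneg (hV _) hp.le]
    rw [← volume_cube a s]
    exact le_iSup₂_of_le a s (le_iSup_of_le hs le_rfl)
  have hpow : ℓ ^ (α * p - n) * I = ((ℓ ^ n) ^ (α / n) * ((ℓ ^ n)⁻¹ * I) ^ (1 / p)) ^ p := by
    rw [ENNReal.mul_rpow_of_nonneg _ _ hp.le, ← ENNReal.rpow_mul (ℓ ^ n), ← ENNReal.rpow_mul,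
      one_div_mul_cancel hp.ne', ENNReal.rpow_one, ← ENNReal.rpow_natCast, ← ENNReal.rpow_mul,
      ← ENNReal.rpow_neg, show (n : ℝ) * (α / n * p) = α * p by field_simp, ← mul_assoc,
      ← ENNReal.rpow_add _ _ hℓ₀ hℓ, sub_eq_add_neg]
  calc I = ℓ ^ (α * p - n) * I * ℓ ^ (n - α * p) := by
        rw [mul_right_comm, ← ENNReal.rpow_add _ _ hℓ₀ hℓ, sub_add_sub_cancel, sub_self,
          ENNReal.rpow_zero, one_mul]
    _ ≤ morrey n α p V ^ p * ℓ ^ (n - α * p) := by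
        rw [hpow]
        gcongr

theorem hasPolyGrowth_withDensity_of_morrey_ne_top (hn : n ≠ 0) (hp : 0 < p) (hV : 0 ≤ V)
    (hM : morrey n α p V ≠ ⊤) :
    HasPolyGrowth (volume.withDensity fun y => ENNReal.ofReal (V y) ^ p)
      (2 ^ (n - α * p) * (morrey n α p V).toNNReal ^ p) (n - α * p) := by
  intro x t ht₀ ht
  lift t to ℝ≥0 using ht
  have ht₀ : 0 < t := pos_iff_ne_zero.2 (coe_ne_zero.1 ht₀)
  rw [withDensity_apply _ isClosed_closedEBall.measurableSet, closedEBall_coe]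
  calc _ ≤ _ := lintegral_mono_set (closedBall_subset_cube x t)
    _ ≤ morrey n α p V ^ p * ENNReal.ofReal (2 * t) ^ (n - α * p) :=
        setLIntegral_cube_rpow_le hn hp hV _ (by positivity)
    _ = _ := by
        rw [ENNReal.ofReal_mul zero_le_two, ENNReal.mul_rpow_of_ne_top (by simp) (by simp),
          coe_mul, ENNReal.coe_rpow_of_nonneg _ hp.le, coe_toNNReal hM,
          ENNReal.coe_rpow_of_ne_zero two_ne_zero, ENNReal.ofReal_ofNat, coe_ofNat,
          ENNReal.ofReal_coe_nnreal]
        ring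

theorem rieszE_eq_lintegral_edist (γ : ℝ) (f : Euc n → ℝ≥0∞) (x : Euc n) :
    rieszE γ f x = ∫⁻ y, edist x y ^ (-(n - γ)) * f y := by
  simp only [rieszE, ← edist_eq_enorm_sub, ofReal_norm, neg_sub]

theorem exists_lintegral_sq_mul_rieszE_le (hα : 0 < α) (hβ : 0 < β) (hq : 1 < q)
    (hqn : β * q ≤ n) (hp : p = q * β / α) :
    ∃ C : ℝ≥0, ∀ U V : Euc n → ℝ, 0 ≤ U → 0 ≤ V → Measurable U → Measurable V →
      morrey n α p U ≠ ⊤ → morrey n α p V ≠ ⊤ → ∀ g : Euc n → ℝ≥0∞, Measurable g →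
      ∫⁻ x, (ENNReal.ofReal (U x ^ (β / (2 * α))) *
          rieszE β (fun y => ENNReal.ofReal (V y ^ (β / (2 * α))) * g y) x) ^ 2 ≤
        C * (morrey n α p U ^ (β / (2 * α)) * morrey n α p V ^ (β / (2 * α))) ^ 2 *
          ∫⁻ y, g y ^ 2 := by
  have hn : n ≠ 0 := Nat.cast_ne_zero.1 ((mul_pos hβ (zero_lt_one.trans hq)).trans_le hqn).ne'
  have hαp : α * p = β * q := by rw [hp]; field_simp
  have hp₀ : 0 < p := by rw [hp]; positivity
  set κ := β / (2 * α) with hκ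
  have hκ₀ : 0 ≤ κ := by positivity
  have hκp : κ * (2 * q) = p := by rw [hp, hκ]; field_simp
  have hvolume := hasPolyGrowth_addHaar (volume : Measure (Euc n))
  rw [finrank_euclideanSpace_fin] at hvolume
  have hgrowth : ∀ W : Euc n → ℝ, 0 ≤ W → morrey n α p W ≠ ⊤ →
      HasPolyGrowth (volume.withDensity fun y => (((W y).toNNReal ^ κ : ℝ≥0) : ℝ≥0∞) ^ (2 * q))
        (2 ^ (n - β * q) * ((morrey n α p W).toNNReal ^ κ) ^ (2 * q)) (n - β * q) := by
    intro W hW hM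
    have := hasPolyGrowth_withDensity_of_morrey_ne_top hn hp₀ hW hM
    simpa only [hαp, ENNReal.coe_rpow_of_nonneg _ hκ₀, ← ENNReal.rpow_mul, ← NNReal.rpow_mul,
      hκp, ENNReal.ofReal] using this
  obtain ⟨C, hC⟩ := exists_lintegral_sq_mul_lintegral_edist_mul_le_mul_sq hvolume hβ hq hqn
    (2 ^ (n - β * q))
  refine ⟨C, fun U V hU hV hUm hVm hMU hMV g hg => ?_⟩
  have hmain := hC (fun y => (U y).toNNReal ^ κ) (fun y => (V y).toNNReal ^ κ) _ _ (by fun_prop)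
    (by fun_prop) (hgrowth U hU hMU) (hgrowth V hV hMV) g hg
  simp only [ENNReal.coe_rpow_of_nonneg _ hκ₀, coe_toNNReal hMU, coe_toNNReal hMV] at hmain
  simpa only [rieszE_eq_lintegral_edist, ENNReal.ofReal, Real.toNNReal_rpow_of_nonneg (hU _),
    Real.toNNReal_rpow_of_nonneg (hV _), ENNReal.coe_rpow_of_nonneg _ hκ₀] using hmain

end Morrey

theorem weighted_endpoint_estimate_general (n : ℕ) (α β q p : ℝ) (hα : 0 < α) (hβ : 0 < β)
    (hq : 1 < q) (hqn : q ≤ n / β) (hp : p = q * β / α) :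
    ∃ C : ℝ≥0∞, 0 < C ∧ C < ⊤ ∧ ∀ V : Euc n → ℝ, 0 ≤ V → Measurable V →
      morrey n α p V ≠ ⊤ → ∀ B : Set (Euc n), MeasurableSet B → ∀ g : Euc n → ℝ, Measurable g →
      (∫⁻ x in B, (ENNReal.ofReal (V x ^ (β / (2 * α))) *
          rieszE β (fun y => ENNReal.ofReal (V y ^ (β / (2 * α))) * (‖g y‖₊ : ℝ≥0∞)) x) ^
            (2 : ℝ)) ^ (1 / 2 : ℝ) ≤
        C * morrey n α p (indicator B V) ^ (β / (2 * α)) * morrey n α p V ^ (β / (2 * α)) *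
          eLpNorm g 2 (volume : Measure (Euc n)) := by
  obtain ⟨C, hC⟩ := exists_lintegral_sq_mul_rieszE_le hα hβ hq
    (by rwa [le_div_iff₀ hβ, mul_comm] at hqn) hp
  refine ⟨((C + 1 : ℝ≥0) : ℝ≥0∞) ^ (1 / 2 : ℝ), by positivity, by finiteness,
    fun V hV hVm hM B hB g hg => ?_⟩
  have hp₀ : 0 ≤ p := by rw [hp]; positivity
  have hBV₀ : 0 ≤ indicator B V := indicator_nonneg fun y _ => hV y
  have hMB : morrey n α p (indicator B V) ≠ ⊤ :=
    ne_top_of_le_ne_top hM (morrey_mono hp₀ hBV₀ (indicator_le_self' fun y _ => hV y))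
  have hmain := hC _ V hBV₀ hV (hVm.indicator hB) hVm hMB hM (fun y => ‖g y‖₊) (by fun_prop)
  have hsqrt : ∀ c : ℝ≥0∞, (c ^ (2 : ℝ)) ^ (1 / 2 : ℝ) = c := fun c => by
    rw [← ENNReal.rpow_mul]
    simp
  simp only [← ENNReal.rpow_two] at hmain
  calc _ ≤ ((C + 1 : ℝ≥0) * (morrey n α p (indicator B V) ^ (β / (2 * α)) *
        morrey n α p V ^ (β / (2 * α))) ^ (2 : ℝ) * ∫⁻ y, (‖g y‖₊ : ℝ≥0∞) ^ (2 : ℝ)) ^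
          (1 / 2 : ℝ) := by
        gcongr
        refine le_trans ?_ (hmain.trans (by gcongr; exact le_self_add))
        refine (setLIntegral_congr_fun hB fun x hx => ?_).trans_le (setLIntegral_le_lintegral B _)
        simp only [indicator_of_mem hx]
    _ = _ := by
        rw [eLpNorm_eq_lintegral_rpow_enorm_toReal two_ne_zero ofNat_ne_top,
          ENNReal.mul_rpow_of_nonneg _ _ (by norm_num), ENNReal.mul_rpow_of_nonneg _ _
            (by norm_num), hsqrt]
        simp [enorm, mul_assoc]

/-- Weighted endpoint estimate for the boundary case `Re z = n-1+ε` of the analytic family. -/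
theorem weighted_endpoint_estimate (n : ℕ) (hn : 3 ≤ n) (α ε q p : ℝ) (hα0 : 0 < α)
    (hαn : α < n) (hε0 : 0 < ε) (hε1 : ε < 1) (hq1 : 1 < q)
    (hq2 : q ≤ n / ((n : ℝ) - 1 + ε)) (hp : p = q * ((n : ℝ) - 1 + ε) / α) :
    ∃ C : ℝ≥0∞, 0 < C ∧ C < ⊤ ∧ ∀ V : Euc n → ℝ, 0 ≤ V → Measurable V →
      morrey n α p V ≠ ⊤ → ∀ r : ℝ, 0 < r → ∀ g : Euc n → ℝ, Measurable g →
      (∫⁻ x in ball (0 : Euc n) r,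
          (ENNReal.ofReal (V x ^ (((n : ℝ) - 1 + ε) / (2 * α))) *
            rieszE ((n : ℝ) - 1 + ε)
              (fun y => ENNReal.ofReal (V y ^ (((n : ℝ) - 1 + ε) / (2 * α))) *
                (‖g y‖₊ : ℝ≥0∞)) x) ^ (2 : ℝ)) ^ (1 / 2 : ℝ) ≤
        C * morrey n α p (Set.indicator (ball (0 : Euc n) r) V) ^
            (((n : ℝ) - 1 + ε) / (2 * α)) *
          morrey n α p V ^ (((n : ℝ) - 1 + ε) / (2 * α)) *
          eLpNorm g 2 (volume : Measure (Euc n)) := by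
  have hn3 : (3 : ℝ) ≤ n := by exact_mod_cast hn
  obtain ⟨C, hC₀, hC, h⟩ := weighted_endpoint_estimate_general n α (n - 1 + ε) q p hα0
    (by linarith) hq1 hq2 hp
  exact ⟨C, hC₀, hC, fun V hV hVm hM r _ => h V hV hVm hM _ measurableSet_ball⟩
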